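/- arXiv:1409.4230 — 3 statements merged into one kernel-verified Lean document; each statement's English description precedes it below -/
import Mathlib

section
/- Let E be a finite-dimensional real vector space, A : E → E an ℝ-linear endomorphism and f : E → ℝ a linear functional. The homogeneous linear loop program P(A,f) is non-terminating (NT) on some input if and only if it is asymptotically non-terminating (ANT) on some input; that is, the set NT(P(A,f)) is nonempty if and only if the set ANT(P(A,f)) is nonempty. -/
/-- The homogeneous linear loop program `P(A,f)`
(`while (f(x) > 0) { x := A x }`) is non-terminating (NT) on some input if and
only if it is asymptotically non-terminating (ANT) on some input:
`NT(P(A,f)) ≠ ∅ ↔ ANT(P(A,f)) ≠ ∅`. -/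
theorem nt_nonempty_iff_ant_nonempty
    (E : Type*) [AddCommGroup E] [Module ℝ E] [FiniteDimensional ℝ E]
    (A : E →ₗ[ℝ] E) (f : E →ₗ[ℝ] ℝ) :
    ({x : E | ∀ k : ℕ, 0 < f ((A ^ k) x)}).Nonempty ↔
      ({x : E | ∃ k₀ : ℕ, ∀ k : ℕ, k₀ ≤ k → 0 < f ((A ^ k) x)}).Nonempty := by
  constructor
  · rintro ⟨x, hx⟩
    exact ⟨x, 0, fun k _ => hx k⟩
  · rintro ⟨x, k₀, hx⟩
    -- The state reached after `k₀` iterations from an ANT input is an NT input.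
    refine ⟨(A ^ k₀) x, fun k => ?_⟩
    have h := hx (k + k₀) (Nat.le_add_left k₀ k)
    rwa [pow_add, Module.End.mul_apply] at h
end

section
/- Let A be an n × n matrix with integer entries (viewed as a linear map on ℝ^n) and let f_1, …, f_r : ℝ^n → ℝ be linear functionals. Then the program P(A,(f_1,…,f_r)) terminates on ℤ^n (i.e. for every x ∈ ℤ^n there exist k ≥ 0 and i ∈ {1,…,r} with f_i(A^k x) ≤ 0) if and only if ANT(P(A,(f_1,…,f_r))) ∩ ℤ^n = ∅. -/
/-! An input on which the loop never stops is ANT with `k₀ = 0`. Conversely, if `x` is an integral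
ANT input with threshold `k₀`, then `A ^ k₀ x` is again integral, since the lattice is stable under
`A` (`integral_pow_mulVecLin`), and the loop never stops on it. -/

lemma integral_pow_mulVecLin {n : ℕ} (A : Matrix (Fin n) (Fin n) ℤ) (x : Fin n → ℝ)
    (hx : ∀ j, ∃ m : ℤ, x j = (m : ℝ)) (k : ℕ) :
    ∀ j, ∃ m : ℤ, (((A.map (Int.cast : ℤ → ℝ)).mulVecLin) ^ k) x j = (m : ℝ) := by
  induction k with
  | zero => simpa using hx
  | succ k ih =>
    intro j
    choose v hv using ih
    refine ⟨∑ l, A j l * v l, ?_⟩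
    rw [pow_succ', Module.End.mul_apply]
    simp [Matrix.mulVec, dotProduct, hv]

/-- For an `n × n` integer matrix `A` acting on `ℝ^n` and
linear functionals `f₁,…,f_r`, the program `P(A,(f₁,…,f_r))` terminates on
`ℤ^n` iff `ANT(P(A,(f₁,…,f_r))) ∩ ℤ^n = ∅`. -/
theorem integer_termination_iff_ant_inter_lattice_empty
    (n r : ℕ) (A : Matrix (Fin n) (Fin n) ℤ)
    (f : Fin r → ((Fin n → ℝ) →ₗ[ℝ] ℝ)) :
    (∀ x : Fin n → ℝ, (∀ j, ∃ m : ℤ, x j = (m : ℝ)) →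
        ∃ k : ℕ, ∃ i : Fin r,
          f i ((((A.map (Int.cast : ℤ → ℝ)).mulVecLin) ^ k) x) ≤ 0) ↔
      {x : Fin n → ℝ | ∃ k₀ : ℕ, ∀ k : ℕ, k₀ ≤ k → ∀ i : Fin r,
            0 < f i ((((A.map (Int.cast : ℤ → ℝ)).mulVecLin) ^ k) x)} ∩
          {x : Fin n → ℝ | ∀ j, ∃ m : ℤ, x j = (m : ℝ)} = ∅ := by
  constructor
  · intro h
    rw [Set.eq_empty_iff_forall_notMem]
    rintro x ⟨⟨k₀, hk₀⟩, hx⟩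
    obtain ⟨k, i, hki⟩ := h _ (integral_pow_mulVecLin A x hx k₀)
    rw [← Module.End.mul_apply, ← pow_add] at hki
    exact absurd (hk₀ (k + k₀) (Nat.le_add_left _ _) i) (not_lt.mpr hki)
  · intro h x hx
    by_contra! hc
    exact Set.eq_empty_iff_forall_notMem.mp h x ⟨⟨0, fun k _ i => hc k i⟩, hx⟩
end

section
/- Let A be an n × n matrix with integer entries, c ∈ ℤ^n, b = (b_1,…,b_r) ∈ ℝ^r and f_1, …, f_r : ℝ^n → ℝ linear functionals. Let A' : ℝ^n × ℝ → ℝ^n × ℝ be the linear map (x,t) ↦ (A x + t c, t) and f_i' : (x,t) ↦ f_i(x) − t b_i. Then the affine program P(A,(f_1,…,f_r),b,c) terminates on ℤ^n (i.e. for every x ∈ ℤ^n there exist k ≥ 0 and i with f_i(x_k) ≤ b_i, where x_0 = x and x_{k+1} = A x_k + c) if and only if ANT(P(A',(f_1',…,f_r'))) ∩ (ℤ^n × {1}) = ∅. -/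
/-!
On the affine hyperplane `t = 1` the linear map `A'` acts as the loop body, so `f' i (A' ^ k (x, 1)) > 0`
says that the `i`-th guard holds after `k` iterations from `x` (`pow_apply_eq_affineIter`).
A non-terminating integer input is therefore an ANT point with `k₀ = 0`. Conversely, if `(x, 1)` is an
integer ANT point with threshold `k₀`, the `k₀`-th iterate of `x` is still an integer point, because
`A` and `c` are integral (`affineIter_integral`), and the program does not terminate on it, because
its orbit is the tail of the orbit of `x` (`affineIter_add`).
-/

/-- The orbit `x_0 = x`, `x_{k+1} = A x_k + c` of the affine loop body. -/
def affineIter {E : Type*} [AddCommGroup E] [Module ℝ E]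
    (A : E →ₗ[ℝ] E) (c : E) (x : E) : ℕ → E
  | 0 => x
  | k + 1 => A (affineIter A c x k) + c

theorem affineIter_add {E : Type*} [AddCommGroup E] [Module ℝ E]
    (A : E →ₗ[ℝ] E) (c x : E) (k j : ℕ) :
    affineIter A c (affineIter A c x k) j = affineIter A c x (k + j) := by
  induction j with
  | zero => rfl
  | succ j ih =>
    change A (affineIter A c (affineIter A c x k) j) + c = A (affineIter A c x (k + j)) + c
    rw [ih]

theorem pow_apply_eq_affineIter {E : Type*} [AddCommGroup E] [Module ℝ E]
    (A : E →ₗ[ℝ] E) (c : E) (A' : E × ℝ →ₗ[ℝ] E × ℝ)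
    (hA' : ∀ (x : E) (t : ℝ), A' (x, t) = (A x + t • c, t)) (x : E) (k : ℕ) :
    (A' ^ k) (x, 1) = (affineIter A c x k, 1) := by
  induction k with
  | zero => rfl
  | succ k ih =>
    rw [pow_succ', Module.End.mul_apply, ih, hA', one_smul]
    rfl

theorem affineIter_integral {n : ℕ} (A : Matrix (Fin n) (Fin n) ℤ) (c : Fin n → ℤ)
    (x : Fin n → ℝ) (hx : ∀ j, ∃ m : ℤ, x j = (m : ℝ)) (k : ℕ) :
    ∀ j, ∃ m : ℤ, affineIter ((A.map (Int.cast : ℤ → ℝ)).mulVecLin)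
      (fun j => ((c j : ℝ))) x k j = (m : ℝ) := by
  induction k with
  | zero => exact hx
  | succ k ih =>
    intro j
    choose m hm using ih
    refine ⟨(A.mulVec m) j + c j, ?_⟩
    simp [affineIter, Matrix.mulVec, dotProduct, hm]

/-- For an `n × n` integer matrix `A`, `c ∈ ℤ^n`, `b ∈ ℝ^r`
and functionals `f₁,…,f_r`, with `A'(x,t) = (A x + t c, t)` and
`fᵢ'(x,t) = fᵢ(x) - t bᵢ`, the affine program `P(A,(f₁,…,f_r),b,c)` terminates
on `ℤ^n` iff `ANT(P(A',(f₁',…,f_r'))) ∩ (ℤ^n × {1}) = ∅`. -/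
theorem integer_affine_termination_iff_ant_inter_lattice_empty
    (n r : ℕ) (A : Matrix (Fin n) (Fin n) ℤ) (c : Fin n → ℤ) (b : Fin r → ℝ)
    (f : Fin r → ((Fin n → ℝ) →ₗ[ℝ] ℝ))
    (A' : (Fin n → ℝ) × ℝ →ₗ[ℝ] (Fin n → ℝ) × ℝ)
    (hA' : ∀ (x : Fin n → ℝ) (t : ℝ),
      A' (x, t) = ((A.map (Int.cast : ℤ → ℝ)).mulVecLin x + t • fun j => ((c j : ℝ)), t))
    (f' : Fin r → ((Fin n → ℝ) × ℝ →ₗ[ℝ] ℝ))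
    (hf' : ∀ (i : Fin r) (x : Fin n → ℝ) (t : ℝ), f' i (x, t) = f i x - t * b i) :
    (∀ x : Fin n → ℝ, (∀ j, ∃ m : ℤ, x j = (m : ℝ)) →
        ∃ k : ℕ, ∃ i : Fin r,
          f i (affineIter ((A.map (Int.cast : ℤ → ℝ)).mulVecLin)
            (fun j => ((c j : ℝ))) x k) ≤ b i) ↔
      {y : (Fin n → ℝ) × ℝ | ∃ k₀ : ℕ, ∀ k : ℕ, k₀ ≤ k → ∀ i : Fin r,
            0 < f' i ((A' ^ k) y)} ∩
          {y : (Fin n → ℝ) × ℝ | (∀ j, ∃ m : ℤ, y.1 j = (m : ℝ)) ∧ y.2 = 1} = ∅ := by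
  have key := pow_apply_eq_affineIter _ _ A' hA'
  constructor
  · intro h
    rw [Set.eq_empty_iff_forall_notMem]
    rintro ⟨x, t⟩ ⟨⟨k₀, hk⟩, hx, ht⟩
    obtain rfl : t = 1 := ht
    obtain ⟨k, i, hki⟩ := h _ (affineIter_integral A c x hx k₀)
    have hpos := hk (k₀ + k) (Nat.le_add_right _ _) i
    rw [key, hf'] at hpos
    rw [affineIter_add] at hki
    linarith
  · intro h x hx
    by_contra! hcon
    have hmem : (x, (1 : ℝ)) ∈ (∅ : Set ((Fin n → ℝ) × ℝ)) := by
      rw [← h]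
      refine ⟨⟨0, fun k _ i => ?_⟩, hx, rfl⟩
      rw [key, hf']
      linarith [hcon k i]
    exact hmem
end
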